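/- arXiv:2506.01169 — 3 statements merged into one kernel-verified Lean document; each statement's English description precedes it below -/
import Mathlib

section
/- Suppose Assumption A1 holds. Then a vector p ∈ Δ_n is an equilibrium of the perception dynamics with reflected appraisals (system (11)) if and only if p = (I_n − A)(I_n − W(p)^⊤ A)^{−1} 𝟙_n / n; in particular, system (11) has at least one equilibrium in Δ_n. -/
/-!
The equivalence is linear algebra: with `q = (I - A)⁻¹ p`, both sides say that
`(I - W(p)ᵀ A) q = 𝟙 / n`, and `I - W(p)ᵀ A` is invertible because it is strictly diagonally
dominant by columns (`isUnit_det_one_sub`).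

For existence, put `c i = a i / (1 - a i)`. The fixed-point equation becomes
`p j + y j = 1 / n + ∑ i, C i j * y i` with the flows
`y i = c i * p i * (1 - p i)` (`exists_logistic_balance`). No topological fixed-point theorem is
needed. If each `y i` is a monotone Lipschitz function of `p i`, this equation has a
unique solution for every right-hand side `b` in place of `1 / n`, and the solution is nonexpansive in `b` for the `ℓ¹` distance: a relaxed
iteration is an `ℓ¹` contraction since `Cᵀ` preserves total mass (`exists_balance`,
`balance_l1_le`). The logistic function is monotone only on `[0, 1/2]`, so it is first cut off at
`1/2`. The solution `p` of the cut-off equation lies in the simplex. If no coordinate exceeds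
`1/2`, the cut is inactive and `p` is an equilibrium. Otherwise let `p k > 1/2`, prescribe
`y k = c k * t * (1 - t)` for `t ∈ [1/2, 1]`, and solve for the remaining cut-off flows. The
solution `P t` depends continuously on `t`, and `P t k - t` is nonnegative at `t = 1/2`, where `p`
is recovered, and nonpositive at `t = 1`, because the coordinates have total mass one. At a zero
`t` of this difference the coordinate `k` is `t ≥ 1/2`, so all other coordinates are at most `1/2`
and no cut is active.
-/

open Matrix Finset

/-- `W(x) = diag(x) + (I - diag(x)) C`. -/
noncomputable def Wmat (n : ℕ) (C : Matrix (Fin n) (Fin n) ℝ) (x : Fin n → ℝ) :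
    Matrix (Fin n) (Fin n) ℝ :=
  Matrix.diagonal x + (1 - Matrix.diagonal x) * C

/-- The map of system (11): `p ↦ (I - A) W(p)ᵀ A (I - A)⁻¹ p + (I - A) 𝟙 / n`. -/
noncomputable def percMap (n : ℕ) (C : Matrix (Fin n) (Fin n) ℝ) (a : Fin n → ℝ)
    (p : Fin n → ℝ) : Fin n → ℝ :=
  ((1 - Matrix.diagonal a) * (Wmat n C p)ᵀ * Matrix.diagonal a *
      (1 - Matrix.diagonal a)⁻¹) *ᵥ p
    + (1 / (n : ℝ)) • ((1 - Matrix.diagonal a) *ᵥ (fun _ => (1 : ℝ)))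

/-- The `n`-simplex `Δ_n`. -/
def simplex (n : ℕ) : Set (Fin n → ℝ) := {x | (∀ i, 0 ≤ x i) ∧ ∑ i, x i = 1}

/-- The box `Γ_n(y, z) = {x : y ≤ x ≤ z}`. -/
def box (n : ℕ) (y z : Fin n → ℝ) : Set (Fin n → ℝ) := {x | ∀ i, y i ≤ x i ∧ x i ≤ z i}

/-! ### The balance equation with monotone flows -/

/-- Pushing a vector through the transpose of a row-stochastic matrix preserves its total mass. -/
lemma sum_transpose_mul {n : ℕ} {C : Matrix (Fin n) (Fin n) ℝ} (hCrow : ∀ i, ∑ j, C i j = 1)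
    (y : Fin n → ℝ) : ∑ j, ∑ i, C i j * y i = ∑ i, y i := by
  rw [Finset.sum_comm]
  exact Finset.sum_congr rfl fun i _ => by rw [← Finset.sum_mul, hCrow, one_mul]

/-- If every `ψ i` is monotone then solutions of `p j + ψ j (p j) = b j + ∑ i, C i j * ψ i (p i)`
depend on `b` in a nonexpansive way for the `ℓ¹` distance. The increments of `p j` and `ψ j (p j)`
have the same sign, so their absolute values add up, and since the rows of `C` sum to one the
`ψ`-increments cancel after summation over `j`. -/
lemma balance_l1_le {n : ℕ} {C : Matrix (Fin n) (Fin n) ℝ}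
    (hC0 : ∀ i j, 0 ≤ C i j) (hCrow : ∀ i, ∑ j, C i j = 1)
    {ψ : Fin n → ℝ → ℝ} (hψ : ∀ i, Monotone (ψ i)) {b b' p p' : Fin n → ℝ}
    (hp : ∀ j, p j + ψ j (p j) = b j + ∑ i, C i j * ψ i (p i))
    (hp' : ∀ j, p' j + ψ j (p' j) = b' j + ∑ i, C i j * ψ i (p' i)) :
    ∑ j, |p j - p' j| ≤ ∑ j, |b j - b' j| := by
  have key : ∀ j, |p j - p' j| + |ψ j (p j) - ψ j (p' j)| ≤
      |b j - b' j| + ∑ i, C i j * |ψ i (p i) - ψ i (p' i)| := by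
    intro j
    have h1 : |p j - p' j| + |ψ j (p j) - ψ j (p' j)|
        = |(p j - p' j) + (ψ j (p j) - ψ j (p' j))| := by
      rcases le_total (p j) (p' j) with h | h
      · have := hψ j h
        rw [abs_of_nonpos (by linarith), abs_of_nonpos (by linarith), abs_of_nonpos (by linarith)]
        ring
      · have := hψ j h
        rw [abs_of_nonneg (by linarith), abs_of_nonneg (by linarith), abs_of_nonneg (by linarith)]
    have h2 : (p j - p' j) + (ψ j (p j) - ψ j (p' j))
        = (b j - b' j) + ∑ i, C i j * (ψ i (p i) - ψ i (p' i)) := by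
      simp only [mul_sub, Finset.sum_sub_distrib]
      linarith [hp j, hp' j]
    rw [h1, h2]
    refine (abs_add_le _ _).trans (add_le_add le_rfl ?_)
    refine (Finset.abs_sum_le_sum_abs _ _).trans (le_of_eq ?_)
    exact Finset.sum_congr rfl fun i _ => by rw [abs_mul, abs_of_nonneg (hC0 i j)]
  have hs := Finset.sum_le_sum fun j (_ : j ∈ Finset.univ) => key j
  rw [Finset.sum_add_distrib, Finset.sum_add_distrib, sum_transpose_mul hCrow] at hs
  linarith

/-- The equation `p j + ψ j (p j) = b j + ∑ i, C i j * ψ i (p i)` is solvable when the `ψ i` are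
monotone and Lipschitz: for small `ε`, the relaxation `p ↦ p - ε • (defect of the equation)` is a
contraction with factor `1 - ε` for the `ℓ¹` distance. -/
lemma exists_balance {n : ℕ} {C : Matrix (Fin n) (Fin n) ℝ}
    (hC0 : ∀ i j, 0 ≤ C i j) (hCrow : ∀ i, ∑ j, C i j = 1)
    {ψ : Fin n → ℝ → ℝ} (hψ : ∀ i, Monotone (ψ i)) {L : ℝ} (hL0 : 0 ≤ L)
    (hL : ∀ i x y, x ≤ y → ψ i y - ψ i x ≤ L * (y - x)) (b : Fin n → ℝ) :
    ∃ p : Fin n → ℝ, ∀ j, p j + ψ j (p j) = b j + ∑ i, C i j * ψ i (p i) := by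
  -- this `ε` makes `x ↦ (1 - ε) * x - ε * ψ i x` nondecreasing
  obtain ⟨ε, hε0, hε⟩ : ∃ ε : ℝ, 0 < ε ∧ ε * (1 + L) = 1 :=
    ⟨1 / (1 + L), by positivity, by field_simp⟩
  have hε1 : ε ≤ 1 := by nlinarith
  let T : PiLp 1 (fun _ : Fin n => ℝ) → PiLp 1 (fun _ : Fin n => ℝ) := fun p =>
    WithLp.toLp 1 fun j => p j - ε * (p j + ψ j (p j) - (b j + ∑ i, C i j * ψ i (p i)))
  have hdist : ∀ p q : PiLp 1 (fun _ : Fin n => ℝ), dist p q = ∑ j, |p j - q j| := fun p q => by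
    rw [PiLp.dist_eq_of_L1]; rfl
  have hT : ContractingWith (1 - ε).toNNReal T := by
    refine ⟨by simpa using hε0, LipschitzWith.of_dist_le_mul fun p q => ?_⟩
    rw [Real.coe_toNNReal _ (by linarith), hdist, hdist]
    have key : ∀ j, |T p j - T q j| ≤ (1 - ε) * |p j - q j| - ε * |ψ j (p j) - ψ j (q j)|
        + ε * ∑ i, C i j * |ψ i (p i) - ψ i (q i)| := by
      intro j
      have h1 : T p j - T q j = ((1 - ε) * (p j - q j) - ε * (ψ j (p j) - ψ j (q j)))
          + ε * ∑ i, C i j * (ψ i (p i) - ψ i (q i)) := by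
        simp only [T, mul_sub, Finset.sum_sub_distrib]
        ring
      have h2 : |(1 - ε) * (p j - q j) - ε * (ψ j (p j) - ψ j (q j))|
          = (1 - ε) * |p j - q j| - ε * |ψ j (p j) - ψ j (q j)| := by
        have hεL : ε * L = 1 - ε := by linarith
        rcases le_total (p j) (q j) with h | h
        · have h3 := hψ j h
          have h4 := mul_le_mul_of_nonneg_left (hL j _ _ h) hε0.le
          rw [← mul_assoc, hεL] at h4
          rw [abs_of_nonpos (by linarith : p j - q j ≤ 0),
            abs_of_nonpos (by linarith : ψ j (p j) - ψ j (q j) ≤ 0), abs_of_nonpos (by linarith)]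
          ring
        · have h3 := hψ j h
          have h4 := mul_le_mul_of_nonneg_left (hL j _ _ h) hε0.le
          rw [← mul_assoc, hεL] at h4
          rw [abs_of_nonneg (by linarith : 0 ≤ p j - q j),
            abs_of_nonneg (by linarith : 0 ≤ ψ j (p j) - ψ j (q j)), abs_of_nonneg (by linarith)]
      rw [h1]
      refine (abs_add_le _ _).trans (add_le_add h2.le ?_)
      rw [abs_mul, abs_of_pos hε0]
      refine mul_le_mul_of_nonneg_left ?_ hε0.le
      refine (Finset.abs_sum_le_sum_abs _ _).trans (le_of_eq ?_)
      exact Finset.sum_congr rfl fun i _ => by rw [abs_mul, abs_of_nonneg (hC0 i j)]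
    refine (Finset.sum_le_sum fun j _ => key j).trans (le_of_eq ?_)
    rw [Finset.sum_add_distrib, Finset.sum_sub_distrib, ← Finset.mul_sum, ← Finset.mul_sum,
      ← Finset.mul_sum, sum_transpose_mul hCrow]
    ring
  refine ⟨fun j => ContractingWith.fixedPoint T hT j, fun j => ?_⟩
  have h := congrArg (fun v : PiLp 1 (fun _ : Fin n => ℝ) => v j) hT.fixedPoint_isFixedPt
  simp only [T] at h
  have h' := (mul_eq_zero.mp (sub_eq_self.mp h)).resolve_left hε0.ne'
  linarith

/-! ### The cut-off logistic function -/

/-- The logistic function `x ↦ c * x * (1 - x)`, frozen at its maximum for `x ≥ 1 / 2` and at `0`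
for `x ≤ 0`, so that for `c ≥ 0` it is monotone and Lipschitz on the whole line. -/
noncomputable def cutLogistic (c x : ℝ) : ℝ :=
  c * (max 0 (min x (1 / 2)) * (1 - max 0 (min x (1 / 2))))

lemma cutLogistic_of_mem {c x : ℝ} (h0 : 0 ≤ x) (h1 : x ≤ 1 / 2) :
    cutLogistic c x = c * (x * (1 - x)) := by
  rw [cutLogistic, min_eq_left h1, max_eq_right h0]

lemma cutLogistic_of_ge {c x : ℝ} (h : 1 / 2 ≤ x) : cutLogistic c x = c * (1 / 4) := by
  rw [cutLogistic, min_eq_right h, max_eq_right (by norm_num)]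
  norm_num

lemma cutLogistic_of_nonpos {c x : ℝ} (h : x ≤ 0) : cutLogistic c x = 0 := by
  rw [cutLogistic, min_eq_left (by linarith), max_eq_left h]
  ring

lemma cutLogistic_monotone {c : ℝ} (hc : 0 ≤ c) : Monotone (cutLogistic c) := by
  intro x y h
  have h1 : max 0 (min x (1 / 2)) ≤ max 0 (min y (1 / 2)) :=
    max_le_max le_rfl (min_le_min h le_rfl)
  have h2 : max 0 (min x (1 / 2)) ≤ 1 / 2 := max_le (by norm_num) (min_le_right _ _)
  have h3 : max 0 (min y (1 / 2)) ≤ 1 / 2 := max_le (by norm_num) (min_le_right _ _)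
  refine mul_le_mul_of_nonneg_left ?_ hc
  nlinarith

lemma cutLogistic_nonneg {c : ℝ} (hc : 0 ≤ c) (x : ℝ) : 0 ≤ cutLogistic c x := by
  rcases le_total x 0 with h | h
  · exact (cutLogistic_of_nonpos h).ge
  · exact (cutLogistic_of_nonpos le_rfl).ge.trans (cutLogistic_monotone hc h)

lemma cutLogistic_lipschitz {c : ℝ} (hc : 0 ≤ c) {x y : ℝ} (h : x ≤ y) :
    cutLogistic c y - cutLogistic c x ≤ c * (y - x) := by
  have h1 : max 0 (min x (1 / 2)) ≤ max 0 (min y (1 / 2)) :=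
    max_le_max le_rfl (min_le_min h le_rfl)
  have h2 : 0 ≤ max 0 (min x (1 / 2)) := le_max_left _ _
  have h3 : max 0 (min y (1 / 2)) - max 0 (min x (1 / 2)) ≤ y - x := by
    have e : min y (1 / 2) ≤ min x (1 / 2) + (y - x) := by
      rcases min_choice x (1 / 2) with e | e <;> rw [e]
      · linarith [min_le_left y (1 / 2)]
      · linarith [min_le_right y (1 / 2)]
    have := max_le (a := (0 : ℝ)) (b := min y (1 / 2))
      (c := max 0 (min x (1 / 2)) + (y - x)) (by linarith)
      (by linarith [le_max_right 0 (min x (1 / 2))])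
    linarith
  rw [cutLogistic, cutLogistic, ← mul_sub]
  refine mul_le_mul_of_nonneg_left ?_ hc
  nlinarith

/-! ### The balance equation with logistic flows -/

/-- The balance equation conserves mass: whatever the flows `y`, the solution has the total mass of
the right-hand side `b`. -/
lemma balance_sum {n : ℕ} {C : Matrix (Fin n) (Fin n) ℝ} (hCrow : ∀ i, ∑ j, C i j = 1)
    {y b p : Fin n → ℝ} (hp : ∀ j, p j + y j = b j + ∑ i, C i j * y i) :
    ∑ j, p j = ∑ j, b j := by
  have h := Finset.sum_congr rfl fun j (_ : j ∈ Finset.univ) => hp j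
  rw [Finset.sum_add_distrib, Finset.sum_add_distrib, sum_transpose_mul hCrow] at h
  linarith

/-- Existence of a solution in the simplex of the equilibrium equations, written in the unknowns
`p`; in the application `c i = a i / (1 - a i)`. -/
lemma exists_logistic_balance {n : ℕ} (hn : 0 < n) {C : Matrix (Fin n) (Fin n) ℝ}
    (hC0 : ∀ i j, 0 ≤ C i j) (hCrow : ∀ i, ∑ j, C i j = 1) {c : Fin n → ℝ} (hc : ∀ i, 0 ≤ c i) :
    ∃ p ∈ simplex n, ∀ j, p j + c j * (p j * (1 - p j)) =
      1 / (n : ℝ) + ∑ i, C i j * (c i * (p i * (1 - p i))) := by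
  have hn' : (0 : ℝ) < n := by exact_mod_cast hn
  have hsum1 : ∑ _j : Fin n, 1 / (n : ℝ) = 1 := by simp [hn'.ne']
  have hcL : ∀ i, c i ≤ ∑ k, c k := fun i =>
    Finset.single_le_sum (fun k _ => hc k) (Finset.mem_univ i)
  have hL0 : 0 ≤ ∑ k, c k := Finset.sum_nonneg fun k _ => hc k
  have hlip : ∀ i x y, x ≤ y →
      cutLogistic (c i) y - cutLogistic (c i) x ≤ (∑ k, c k) * (y - x) := fun i x y h =>
    (cutLogistic_lipschitz (hc i) h).trans
      (mul_le_mul_of_nonneg_right (hcL i) (sub_nonneg.mpr h))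
  obtain ⟨p, hp⟩ := exists_balance hC0 hCrow (ψ := fun i => cutLogistic (c i))
    (fun i => cutLogistic_monotone (hc i)) hL0 hlip (fun _ => 1 / (n : ℝ))
  have hp0 : ∀ j, 0 ≤ p j := by
    intro j
    by_contra! hj
    have h1 := hp j
    have h2 : 0 ≤ ∑ i, C i j * cutLogistic (c i) (p i) :=
      Finset.sum_nonneg fun i _ => mul_nonneg (hC0 i j) (cutLogistic_nonneg (hc i) _)
    have h3 : 0 < 1 / (n : ℝ) := by positivity
    simp only [cutLogistic_of_nonpos hj.le] at h1
    linarith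
  by_cases hhalf : ∀ j, p j ≤ 1 / 2
  · refine ⟨p, ⟨hp0, (balance_sum hCrow hp).trans hsum1⟩, fun j => ?_⟩
    have h := hp j
    simpa only [fun i => cutLogistic_of_mem (c := c i) (hp0 i) (hhalf i)] using h
  push Not at hhalf
  obtain ⟨k, hk⟩ := hhalf
  -- the cut is active at `k` only; its flow is now prescribed to be `c k * (t * (1 - t))`
  let ψ : Fin n → ℝ → ℝ := fun i => if i = k then fun _ => 0 else cutLogistic (c i)
  let s : ℝ → ℝ := fun t => c k * (t * (1 - t))
  let B : ℝ → Fin n → ℝ := fun t j => 1 / (n : ℝ) + C k j * s t - if j = k then s t else 0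
  have hψk : ∀ x, ψ k x = 0 := fun x => by simp [ψ]
  have hψne : ∀ i, i ≠ k → ψ i = cutLogistic (c i) := fun i hi => by simp [ψ, hi]
  have hψmono : ∀ i, Monotone (ψ i) := by
    intro i
    by_cases hi : i = k
    · subst hi
      intro x y _
      rw [hψk, hψk]
    · rw [hψne i hi]
      exact cutLogistic_monotone (hc i)
  have hψlip : ∀ i x y, x ≤ y → ψ i y - ψ i x ≤ (∑ k, c k) * (y - x) := by
    intro i x y h
    by_cases hi : i = k
    · subst hi
      rw [hψk, hψk, sub_zero]
      exact mul_nonneg hL0 (sub_nonneg.mpr h)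
    · rw [hψne i hi]
      exact hlip i x y h
  choose P hP using fun t => exists_balance hC0 hCrow hψmono hL0 hψlip (B t)
  -- absorbing the prescribed flow into `ψ` gives back an equation with right-hand side `1 / n`
  have hflow : ∀ (t : ℝ) (q y : Fin n → ℝ), y k = s t → (∀ i, i ≠ k → y i = ψ i (q i)) →
      ((∀ j, q j + ψ j (q j) = B t j + ∑ i, C i j * ψ i (q i)) ↔
        ∀ j, q j + y j = 1 / (n : ℝ) + ∑ i, C i j * y i) := by
    intro t q y hyk hy
    refine forall_congr' fun j => ?_
    have hy' : ∀ i, y i = ψ i (q i) + if i = k then s t else 0 := by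
      intro i
      by_cases hi : i = k
      · subst hi; simp [hψk, hyk]
      · simp [hi, hy i hi]
    have e : ∑ i, C i j * y i = ∑ i, C i j * ψ i (q i) + C k j * s t := by
      simp [hy', mul_add, Finset.sum_add_distrib]
    rw [e, hy' j]
    simp only [B]
    constructor <;> intro h <;> linarith
  let Y : ℝ → Fin n → ℝ := fun t i => if i = k then s t else ψ i (P t i)
  have hYk : ∀ t, Y t k = s t := fun t => by simp [Y]
  have hYne : ∀ t i, i ≠ k → Y t i = ψ i (P t i) := fun t i hi => by simp [Y, hi]
  have hPY : ∀ t j, P t j + Y t j = 1 / (n : ℝ) + ∑ i, C i j * Y t i := fun t =>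
    (hflow t (P t) (Y t) (hYk t) (hYne t)).mp (hP t)
  have hPsum : ∀ t, ∑ j, P t j = 1 := fun t => (balance_sum hCrow (hPY t)).trans hsum1
  have hPnn : ∀ t ∈ Set.Icc (1 / 2 : ℝ) 1, ∀ j, j ≠ k → 0 ≤ P t j := by
    intro t ht j hj
    by_contra! hneg
    have hY0 : ∀ i, 0 ≤ Y t i := by
      intro i
      by_cases hi : i = k
      · subst hi
        rw [hYk]
        exact mul_nonneg (hc _) (mul_nonneg (by linarith [ht.1]) (by linarith [ht.2]))
      · rw [hYne t i hi, hψne i hi]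
        exact cutLogistic_nonneg (hc i) _
    have h1 := hPY t j
    rw [hYne t j hj, hψne j hj, cutLogistic_of_nonpos hneg.le] at h1
    have h2 : 0 ≤ ∑ i, C i j * Y t i :=
      Finset.sum_nonneg fun i _ => mul_nonneg (hC0 i j) (hY0 i)
    have h3 : 0 < 1 / (n : ℝ) := by positivity
    linarith
  have hPcont : Continuous fun t => P t k := by
    have hBcont : ∀ j, Continuous fun t => B t j := by
      intro j
      by_cases hj : j = k <;> simp only [B, s, hj, if_true, if_false] <;> fun_prop
    rw [continuous_iff_continuousAt]
    intro t₀
    rw [ContinuousAt, tendsto_iff_dist_tendsto_zero]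
    refine squeeze_zero (g := fun t => ∑ j, |B t j - B t₀ j|) (fun _ => dist_nonneg)
      (fun t => ?_) ?_
    · rw [Real.dist_eq]
      exact (Finset.single_le_sum (f := fun j => |P t j - P t₀ j|)
        (fun j _ => abs_nonneg _) (Finset.mem_univ k)).trans
        (balance_l1_le hC0 hCrow hψmono (hP t) (hP t₀))
    · have : Continuous fun t => ∑ j, |B t j - B t₀ j| :=
        continuous_finsetSum _ fun j _ => ((hBcont j).sub continuous_const).abs
      simpa using this.tendsto t₀
  -- at `t = 1 / 2` the prescribed flow is the cut value, so the first solution is recovered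
  have hstart : 1 / 2 ≤ P (1 / 2) k := by
    have hp2 := (hflow (1 / 2) p (fun i => cutLogistic (c i) (p i))
      (by rw [cutLogistic_of_ge hk.le]; simp only [s]; norm_num)
      (fun i hi => by rw [hψne i hi])).mpr hp
    have h := balance_l1_le hC0 hCrow hψmono (hP (1 / 2)) hp2
    simp only [sub_self, abs_zero, Finset.sum_const_zero] at h
    have h' := (Finset.single_le_sum (f := fun j => |P (1 / 2) j - p j|)
        (fun j _ => abs_nonneg _) (Finset.mem_univ k)).trans h
    have := abs_nonpos_iff.mp h'
    linarith
  have hend : P 1 k ≤ 1 := by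
    have h := hPsum 1
    rw [← Finset.add_sum_erase _ _ (Finset.mem_univ k)] at h
    have : 0 ≤ ∑ j ∈ Finset.univ.erase k, P 1 j := Finset.sum_nonneg fun j hj =>
      hPnn 1 (by norm_num) j (Finset.ne_of_mem_erase hj)
    linarith
  obtain ⟨t, ht, hfix⟩ : ∃ t ∈ Set.Icc (1 / 2 : ℝ) 1, P t k - t = 0 :=
    intermediate_value_Icc' (by norm_num) (hPcont.sub continuous_id).continuousOn
      ⟨by simpa using hend, by simpa using hstart⟩
  have hfix : P t k = t := sub_eq_zero.mp hfix
  have hnn : ∀ j, 0 ≤ P t j := by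
    intro j
    by_cases hj : j = k
    · rw [hj, hfix]; linarith [ht.1]
    · exact hPnn t ht j hj
  -- the coordinate `k` already carries mass at least `1 / 2`, so no other cut is active
  have hle : ∀ j, j ≠ k → P t j ≤ 1 / 2 := by
    intro j hj
    have h := hPsum t
    rw [← Finset.add_sum_erase _ _ (Finset.mem_univ k), hfix] at h
    have := Finset.single_le_sum (f := P t) (fun i _ => hnn i)
      (Finset.mem_erase.mpr ⟨hj, Finset.mem_univ j⟩)
    linarith [ht.1]
  refine ⟨P t, ⟨hnn, hPsum t⟩, fun j => ?_⟩
  have hYeq : ∀ i, Y t i = c i * (P t i * (1 - P t i)) := by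
    intro i
    by_cases hi : i = k
    · subst hi; rw [hYk, hfix]
    · rw [hYne t i hi, hψne i hi, cutLogistic_of_mem (hnn i) (hle i hi)]
  simpa only [hYeq] using hPY t j

/-! ### The matrices of the system -/

lemma one_sub_diagonal_inv {n : ℕ} {a : Fin n → ℝ} (ha1 : ∀ i, a i < 1) :
    (1 - Matrix.diagonal a)⁻¹ = Matrix.diagonal fun i => (1 - a i)⁻¹ := by
  refine Matrix.inv_eq_right_inv ?_
  rw [← Matrix.diagonal_one, Matrix.diagonal_sub, Matrix.diagonal_mul_diagonal]
  exact congrArg _ (funext fun i => mul_inv_cancel₀ (sub_pos.mpr (ha1 i)).ne')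

lemma Wmat_apply (n : ℕ) (C : Matrix (Fin n) (Fin n) ℝ) (x : Fin n → ℝ) (i j : Fin n) :
    Wmat n C x i j = (if i = j then x i else 0) + (1 - x i) * C i j := by
  rw [Wmat, ← Matrix.diagonal_one, Matrix.diagonal_sub, Matrix.add_apply, Matrix.diagonal_mul,
    Matrix.diagonal_apply]

/-- `I - W(p)ᵀ A` is strictly diagonally dominant by columns, hence invertible. -/
lemma isUnit_det_one_sub {n : ℕ} {C : Matrix (Fin n) (Fin n) ℝ}
    (hC0 : ∀ i j, 0 ≤ C i j) (hCrow : ∀ i, ∑ j, C i j = 1)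
    {a : Fin n → ℝ} (ha0 : ∀ i, 0 ≤ a i) (ha1 : ∀ i, a i < 1)
    {p : Fin n → ℝ} (hp : p ∈ simplex n) :
    IsUnit (1 - (Wmat n C p)ᵀ * Matrix.diagonal a).det := by
  rw [isUnit_iff_ne_zero]
  have hp1 : ∀ i, p i ≤ 1 := fun i =>
    hp.2 ▸ Finset.single_le_sum (fun j _ => hp.1 j) (Finset.mem_univ i)
  have hW0 : ∀ i j, 0 ≤ Wmat n C p i j := by
    intro i j
    rw [Wmat_apply]
    have := mul_nonneg (sub_nonneg.mpr (hp1 i)) (hC0 i j)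
    have := hp.1 i
    split_ifs <;> linarith
  have hW1 : ∀ i, ∑ j, Wmat n C p i j = 1 := by
    intro i
    simp [Wmat_apply, Finset.sum_add_distrib, ← Finset.mul_sum, hCrow]
  refine det_ne_zero_of_sum_col_lt_diag fun k => ?_
  have hoff : ∀ i ∈ Finset.univ.erase k,
      ‖(1 - (Wmat n C p)ᵀ * Matrix.diagonal a) i k‖ = Wmat n C p k i * a k := by
    intro i hi
    rw [Matrix.sub_apply, Matrix.one_apply_ne (Finset.ne_of_mem_erase hi), Matrix.mul_diagonal,
      Matrix.transpose_apply, zero_sub, norm_neg, Real.norm_of_nonneg (mul_nonneg (hW0 k i) (ha0 k))]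
  rw [Finset.sum_congr rfl hoff, ← Finset.sum_mul]
  have h := hW1 k
  rw [← Finset.add_sum_erase _ _ (Finset.mem_univ k)] at h
  have hd : (1 - (Wmat n C p)ᵀ * Matrix.diagonal a) k k = 1 - Wmat n C p k k * a k := by
    simp [Matrix.mul_diagonal]
  rw [hd]
  refine lt_of_lt_of_le ?_ (Real.le_norm_self _)
  have h2 : ∑ x ∈ Finset.univ.erase k, Wmat n C p k x = 1 - Wmat n C p k k := by linarith
  rw [h2]
  linarith [ha1 k]

/-- The coordinates of `percMap`, with the inverse of `I - A` computed. -/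
lemma percMap_apply {n : ℕ} (C : Matrix (Fin n) (Fin n) ℝ) {a : Fin n → ℝ} (ha1 : ∀ i, a i < 1)
    (p : Fin n → ℝ) (j : Fin n) :
    percMap n C a p j = (1 - a j) *
      (∑ i, Wmat n C p i j * (a i * ((1 - a i)⁻¹ * p i)) + 1 / (n : ℝ)) := by
  have hinv := one_sub_diagonal_inv ha1
  rw [percMap, hinv, ← Matrix.diagonal_one, Matrix.diagonal_sub]
  simp only [← Matrix.mulVec_mulVec, Pi.add_apply, Pi.smul_apply, Matrix.mulVec_diagonal,
    smul_eq_mul, mul_one]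
  rw [mul_add, mul_comm (1 / (n : ℝ))]
  simp [Matrix.mulVec, dotProduct, Matrix.diagonal_apply]

/-! ### Equilibria -/

/-- under Assumption A1, `p ∈ Δ_n` is an equilibrium of system (11) iff
`p = (I - A)(I - W(p)ᵀ A)⁻¹ 𝟙 / n`; in particular system (11) has an equilibrium in `Δ_n`. -/
theorem equilibria_characterization_and_existence
    (n : ℕ) (hn : 2 ≤ n)
    (C : Matrix (Fin n) (Fin n) ℝ)
    (hC0 : ∀ i j, 0 ≤ C i j) (hCrow : ∀ i, ∑ j, C i j = 1) (hCdiag : ∀ i, C i i = 0)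
    (a : Fin n → ℝ) (ha0 : ∀ i, 0 ≤ a i) (ha1 : ∀ i, a i < 1) (hane : a ≠ 0) :
    (∀ p ∈ simplex n,
      (percMap n C a p = p ↔
        p = ((1 - Matrix.diagonal a) * (1 - (Wmat n C p)ᵀ * Matrix.diagonal a)⁻¹) *ᵥ
          ((1 / (n : ℝ)) • fun _ => (1 : ℝ)))) ∧
    ∃ p ∈ simplex n, percMap n C a p = p := by
  have hne : ∀ i, 1 - a i ≠ 0 := fun i => (sub_pos.mpr (ha1 i)).ne'
  refine ⟨fun p hp => ?_, ?_⟩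
  · have hM := isUnit_det_one_sub hC0 hCrow ha0 ha1 hp
    set M := 1 - (Wmat n C p)ᵀ * Matrix.diagonal a with hMdef
    set v : Fin n → ℝ := (1 / (n : ℝ)) • fun _ => (1 : ℝ) with hv
    -- both sides say that `q = (I - A)⁻¹ p` solves `M q = 𝟙 / n`
    set q : Fin n → ℝ := fun i => (1 - a i)⁻¹ * p i with hq
    have h1 : percMap n C a p = p ↔ M *ᵥ q = v := by
      rw [funext_iff, funext_iff]
      refine forall_congr' fun j => ?_
      have e : (M *ᵥ q) j = q j - ∑ i, Wmat n C p i j * (a i * q i) := by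
        rw [hMdef, Matrix.sub_mulVec, Matrix.one_mulVec, Pi.sub_apply]
        simp [Matrix.mulVec, dotProduct, Matrix.mul_diagonal, mul_assoc]
      have e2 : p j = (1 - a j) * q j := by simp only [hq]; rw [mul_inv_cancel_left₀ (hne j)]
      have e3 : v j = 1 / (n : ℝ) := by simp [hv]
      rw [percMap_apply C ha1, e, e3]
      rw [e2, mul_right_inj' (hne j)]
      constructor <;> intro h <;> linarith
    have h2 : M *ᵥ q = v ↔ q = M⁻¹ *ᵥ v := by
      constructor
      · rintro h
        rw [← h, Matrix.mulVec_mulVec, Matrix.nonsing_inv_mul _ hM, Matrix.one_mulVec]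
      · rintro h
        rw [h, Matrix.mulVec_mulVec, Matrix.mul_nonsing_inv _ hM, Matrix.one_mulVec]
    rw [h1, h2, ← Matrix.mulVec_mulVec, funext_iff, funext_iff]
    refine forall_congr' fun j => ?_
    rw [← Matrix.diagonal_one, Matrix.diagonal_sub, Matrix.mulVec_diagonal]
    simp only [hq]
    rw [inv_mul_eq_iff_eq_mul₀ (hne j)]
  · obtain ⟨p, hp, h⟩ := exists_logistic_balance (by omega : 0 < n) hC0 hCrow
      (c := fun i => a i * (1 - a i)⁻¹)
      (fun i => mul_nonneg (ha0 i) (inv_nonneg.mpr (sub_pos.mpr (ha1 i)).le))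
    refine ⟨p, hp, funext fun j => ?_⟩
    have e : ∑ i, Wmat n C p i j * (a i * ((1 - a i)⁻¹ * p i)) =
        p j * (a j * ((1 - a j)⁻¹ * p j))
          + ∑ i, C i j * (a i * (1 - a i)⁻¹ * (p i * (1 - p i))) := by
      simp only [Wmat_apply, add_mul, Finset.sum_add_distrib, ite_mul, zero_mul,
        Finset.sum_ite_eq', Finset.mem_univ, if_true]
      exact congrArg _ (Finset.sum_congr rfl fun i _ => by ring)
    have hj := h j
    rw [percMap_apply C ha1, e, add_assoc, add_comm _ (1 / (n : ℝ)), ← hj]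
    have := hne j
    field_simp
    ring
end

section
/- Suppose Assumption A1 holds. Then the perception dynamics with reflected appraisals (system (11)) has a unique equilibrium p* in the n-simplex Δ_n, and this equilibrium lies in the interior of Δ_n (all its entries are strictly positive). -/
/-!
Put `κ i = a i / (1 - a i)` and `φ x = x (1 - x)`. Dividing the fixed point equation by `1 - a j`,
an equilibrium is a solution of the balance equations

  `p j + κ j φ(p j) = 1 / n + ∑ i, C i j κ i φ(p i)`   for all `j`    (`IsBalanced`).

Read `κ i φ(p i)` as the outflow of node `i`; the row sums of `C` being `1`, summing the equations
gives `∑ p = 1`, and no entry of a nonnegative solution vanishes. A nonnegative `x` with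
`x j + y j ≤ ∑ i, C i j x i`, `y ≥ 0`, must have `y = 0` (`flow_eq_zero`).

*Uniqueness* (`IsBalanced.unique`). Let `p`, `q` be solutions in the simplex. If `p i + q i ≤ 1`
wherever `p i ≠ q i`, then the outflow differences have the sign of `p i - q i`, so `flow_eq_zero`
applies to `y = |p - q|`. Otherwise there is a `k` with `p k + q k > 1` and, say, `p k > q k`
(`IsBalanced.not_lt_of_one_lt_add`). Let `θ = φ(p k) / φ(q k) < 1`. If `φ(p j) ≤ θ φ(q j)` for some
`j ≠ k` then concavity of `φ` yields `p j ≤ θ q j`, and comparing the equations of `p` with `θ` times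
those of `q` contradicts `flow_eq_zero`, because of the surplus `(1 - θ) / n`. Hence
`φ(p j) > θ φ(q j)` for all `j ≠ k`. But with `w = (1 - p k) / (1 - q k)` some `j ≠ k` satisfies
`p j ≤ w q j`, and since `q j ≤ 1 - q k` this gives `φ(p j) ≤ φ(w q j) ≤ θ φ(q j)`.

*Existence* (`exists_isBalanced`). The function `φ` is not monotone on `[0, 1]`, so it is replaced by
the monotone `φcap x = φ (min x (1/2))`. The outflows then solve a fixed point problem for a monotone
map, and the least fixed point argument (`exists_fixed_point`) gives a solution `p'` of the capped
system. If all `p' j ≤ 1/2` this is an equilibrium. Otherwise exactly one entry, `p' k`, exceeds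
`1/2`. As `φ(p k) = φ(∑ j ≠ k, p j)`, driving the outflow of `k` by `φcap (∑ j ≠ k, p j)` gives
another monotone map, for which the outflows of `p'` are a super-solution. Its fixed point below them
satisfies `∑ j ≠ k, p j < 1/2`, where the cap is inactive.
-/

open Matrix Finset

/-- The balance equations `p j + κ j φ(p j) = 1 / n + ∑ i, C i j κ i φ(p i)`, `φ x = x (1 - x)`, with
free weights `κ`. For `κ i = a i / (1 - a i)` they say that `p` is an equilibrium. -/
def IsBalanced (n : ℕ) (C : Matrix (Fin n) (Fin n) ℝ) (κ p : Fin n → ℝ) : Prop :=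
  ∀ j, p j + κ j * (p j * (1 - p j)) = 1 / (n : ℝ) + ∑ i, C i j * (κ i * (p i * (1 - p i)))

/-! ### Reduction to the balance equations -/

theorem percMap_eq_iff (n : ℕ) (C : Matrix (Fin n) (Fin n) ℝ) (a : Fin n → ℝ)
    (ha1 : ∀ i, a i < 1) (p : Fin n → ℝ) :
    percMap n C a p = p ↔ IsBalanced n C (fun i => a i / (1 - a i)) p := by
  have hne : ∀ i, 1 - a i ≠ 0 := fun i => by linarith [ha1 i]
  have hdiag : (1 - Matrix.diagonal a : Matrix (Fin n) (Fin n) ℝ)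
      = Matrix.diagonal (fun i => 1 - a i) := by
    rw [← Matrix.diagonal_one, Matrix.diagonal_sub]
  have hinv : (Matrix.diagonal (fun i => 1 - a i) : Matrix (Fin n) (Fin n) ℝ)⁻¹
      = Matrix.diagonal (fun i => (1 - a i)⁻¹) := by
    apply Matrix.inv_eq_right_inv
    rw [Matrix.diagonal_mul_diagonal, ← Matrix.diagonal_one]
    congr 1
    funext i
    exact mul_inv_cancel₀ (hne i)
  have hdiagp : (1 - Matrix.diagonal p : Matrix (Fin n) (Fin n) ℝ)
      = Matrix.diagonal (fun i => 1 - p i) := by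
    rw [← Matrix.diagonal_one, Matrix.diagonal_sub]
  have key : ∀ j, percMap n C a p j = (1 - a j) *
      (a j / (1 - a j) * (p j * p j) + ∑ i, C i j * (a i / (1 - a i) * (p i * (1 - p i)))
        + 1 / (n : ℝ)) := by
    intro j
    have h1 : ∀ i, (diagonal p i j + (1 - p i) * C i j) * a i * (1 - a i)⁻¹ * p i
        = diagonal p i j * (a i / (1 - a i) * p i)
          + C i j * (a i / (1 - a i) * (p i * (1 - p i))) := by
      intro i
      rw [div_eq_mul_inv]
      ring
    have h2 : ∑ i, diagonal p i j * (a i / (1 - a i) * p i) = a j / (1 - a j) * (p j * p j) := by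
      rw [Finset.sum_eq_single j]
      · rw [Matrix.diagonal_apply_eq]
        ring
      · intro i _ hij
        rw [Matrix.diagonal_apply_ne _ hij, zero_mul]
      · simp
    have h3 : percMap n C a p j
        = ∑ i, (1 - a j) * ((diagonal p i j + (1 - p i) * C i j) * a i * (1 - a i)⁻¹ * p i)
          + 1 / (n : ℝ) * (1 - a j) := by
      unfold percMap Wmat
      rw [hdiag, hdiagp, hinv]
      simp only [Pi.add_apply, Pi.smul_apply, smul_eq_mul, Matrix.mulVec_diagonal, mul_one]
      congr 1
      simp only [Matrix.mulVec, dotProduct, Matrix.mul_diagonal, Matrix.diagonal_mul,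
        Matrix.transpose_apply, Matrix.add_apply]
      exact Finset.sum_congr rfl fun i _ => by ring
    rw [h3, ← Finset.mul_sum, Finset.sum_congr rfl (fun i _ => h1 i), Finset.sum_add_distrib, h2]
    ring
  rw [funext_iff]
  refine forall_congr' fun j => ?_
  rw [key j]
  set S := ∑ i, C i j * (a i / (1 - a i) * (p i * (1 - p i)))
  set N := 1 / (n : ℝ)
  have hp : (1 - a j) * (a j / (1 - a j)) = a j := mul_div_cancel₀ _ (hne j)
  constructor
  · intro h
    apply mul_left_cancel₀ (hne j)
    linear_combination (-1 : ℝ) * h + p j * hp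
  · intro h
    linear_combination (-(1 - a j)) * h + p j * hp

/-! ### Uniqueness -/

section Uniqueness

theorem sum_flow {n : ℕ} {C : Matrix (Fin n) (Fin n) ℝ} (hCrow : ∀ i, ∑ j, C i j = 1)
    (x : Fin n → ℝ) : ∑ j, ∑ i, C i j * x i = ∑ i, x i := by
  rw [Finset.sum_comm]
  exact Finset.sum_congr rfl fun i _ => by rw [← Finset.sum_mul, hCrow, one_mul]

/-- Conservation of mass: a flow `x` routed by a row-stochastic matrix cannot leave a surplus. -/
theorem flow_eq_zero {n : ℕ} {C : Matrix (Fin n) (Fin n) ℝ} (hCrow : ∀ i, ∑ j, C i j = 1)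
    (x y : Fin n → ℝ) (hy : ∀ j, 0 ≤ y j) (h : ∀ j, x j + y j ≤ ∑ i, C i j * x i) (j : Fin n) :
    y j = 0 := by
  have h1 := Finset.sum_le_sum fun j (_ : j ∈ Finset.univ) => h j
  rw [sum_flow hCrow, Finset.sum_add_distrib] at h1
  have h2 := Finset.single_le_sum (fun i _ => hy i) (Finset.mem_univ j)
  linarith [hy j]

variable {n : ℕ} {C : Matrix (Fin n) (Fin n) ℝ} {κ p q : Fin n → ℝ}

/-- Two distinct solutions cannot differ at an entry `k` with `p k + q k > 1`. -/
theorem IsBalanced.not_lt_of_one_lt_add (hn : 0 < n) (hC0 : ∀ i j, 0 ≤ C i j)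
    (hCrow : ∀ i, ∑ j, C i j = 1) (hκ : ∀ i, 0 ≤ κ i)
    (hp : IsBalanced n C κ p) (hq : IsBalanced n C κ q)
    (hps : p ∈ simplex n) (hqs : q ∈ simplex n) (k : Fin n) (hk : 1 < p k + q k) :
    ¬ q k < p k := by
  intro hlt
  obtain ⟨hp0, hp1⟩ := hps
  obtain ⟨hq0, hq1⟩ := hqs
  have hsp := Finset.add_sum_erase Finset.univ p (Finset.mem_univ k)
  have hsq := Finset.add_sum_erase Finset.univ q (Finset.mem_univ k)
  rw [hp1] at hsp
  rw [hq1] at hsq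
  have hple : ∀ j, j ≠ k → p j ≤ 1 - p k := fun j hj => by
    have := Finset.single_le_sum (f := p) (fun i _ => hp0 i)
      (Finset.mem_erase.2 ⟨hj, Finset.mem_univ j⟩)
    linarith
  have hqle : ∀ j, j ≠ k → q j ≤ 1 - q k := fun j hj => by
    have := Finset.single_le_sum (f := q) (fun i _ => hq0 i)
      (Finset.mem_erase.2 ⟨hj, Finset.mem_univ j⟩)
    linarith
  have hpk : p k ≤ 1 := by
    linarith [Finset.sum_nonneg fun i (_ : i ∈ Finset.univ.erase k) => hp0 i]
  have hqk0 : 0 < q k := by linarith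
  have hqk1 : 0 < 1 - q k := by linarith
  set w := (1 - p k) / (1 - q k) with hw
  set θ := w * p k / q k with hθ
  have hw0 : 0 ≤ w := div_nonneg (by linarith) hqk1.le
  have hw1 : w ≤ 1 := by rw [hw, div_le_one hqk1]; linarith
  have hwQ : w * (1 - q k) = 1 - p k := div_mul_cancel₀ _ hqk1.ne'
  have hθq : θ * q k = w * p k := div_mul_cancel₀ _ hqk0.ne'
  have hθ0 : 0 ≤ θ := div_nonneg (mul_nonneg hw0 (hp0 k)) hqk0.le
  have hθφ : θ * (q k * (1 - q k)) = p k * (1 - p k) := by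
    linear_combination (1 - q k) * hθq + p k * hwQ
  have hθ1 : θ < 1 := by
    have hpos : 0 < q k * (1 - q k) := mul_pos hqk0 hqk1
    by_contra hc
    nlinarith [mul_pos (sub_pos.2 hlt) (sub_pos.2 hk)]
  have hnpos : 0 < (1 - θ) * (1 / (n : ℝ)) :=
    mul_pos (by linarith) (one_div_pos.2 (by exact_mod_cast hn))
  have hsum : ∀ j, j ≠ k → p j + q j < 1 := fun j hj => by linarith [hple j hj, hqle j hj]
  classical
  -- `κ i * e i` is the amount by which the outflow of `p` falls short of `θ` times that of `q`
  set e : Fin n → ℝ := fun i => max 0 (θ * (q i * (1 - q i)) - p i * (1 - p i)) with he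
  have he0 : ∀ i, 0 ≤ e i := fun i => le_max_left _ _
  have hek : e k = 0 := by simp [he, hθφ]
  set y : Fin n → ℝ := fun j =>
    if j ≠ k ∧ p j * (1 - p j) ≤ θ * (q j * (1 - q j)) then (1 - θ) * (1 / (n : ℝ)) else 0 with hy
  have hy0 : ∀ j, 0 ≤ y j := fun j => by
    simp only [hy]; split_ifs
    · exact hnpos.le
    · exact le_rfl
  have hflow : ∀ j, κ j * e j + y j ≤ ∑ i, C i j * (κ i * e i) := by
    intro j
    have hR : 0 ≤ ∑ i, C i j * (κ i * e i) :=
      Finset.sum_nonneg fun i _ => mul_nonneg (hC0 i j) (mul_nonneg (hκ i) (he0 i))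
    by_cases hj : j ≠ k ∧ p j * (1 - p j) ≤ θ * (q j * (1 - q j))
    · have hyj : y j = (1 - θ) * (1 / (n : ℝ)) := if_pos hj
      have hej : e j = θ * (q j * (1 - q j)) - p j * (1 - p j) :=
        max_eq_right (by linarith [hj.2])
      -- concavity of `φ` on `[0, q j]`, and monotonicity since `p j + θ * q j < 1`
      have hpj : p j ≤ θ * q j := by
        by_contra hc
        have hs := hsum j hj.1
        have h1 : θ * q j ≤ q j := mul_le_of_le_one_left (hq0 j) hθ1.le
        have h2 : 0 < (p j - θ * q j) * (1 - θ * q j - p j) :=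
          mul_pos (by linarith) (by linarith)
        nlinarith [mul_nonneg (mul_nonneg hθ0 (by linarith : 0 ≤ 1 - θ))
          (mul_nonneg (hq0 j) (hq0 j)), hj.2]
      have hle : θ * ∑ i, C i j * (κ i * (q i * (1 - q i)))
          - ∑ i, C i j * (κ i * (p i * (1 - p i))) ≤ ∑ i, C i j * (κ i * e i) := by
        rw [Finset.mul_sum, ← Finset.sum_sub_distrib]
        refine Finset.sum_le_sum fun i _ => ?_
        have := mul_le_mul_of_nonneg_left
          (le_max_right 0 (θ * (q i * (1 - q i)) - p i * (1 - p i)))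
          (mul_nonneg (hC0 i j) (hκ i))
        simp only [he]
        linarith
      rw [hyj, hej]
      have e1 := hp j
      have e2 : θ * (q j + κ j * (q j * (1 - q j)))
          = θ * (1 / (n : ℝ) + ∑ i, C i j * (κ i * (q i * (1 - q i)))) := by rw [hq j]
      linarith
    · have hyj : y j = 0 := if_neg hj
      have hej : e j = 0 := by
        by_cases hjk : j = k
        · rw [hjk, hek]
        · exact max_eq_left (by
            have : ¬ _ := fun h => hj ⟨hjk, h⟩
            linarith [not_le.1 this])
      rw [hyj, hej]
      simpa using hR
  have hstrict : ∀ j, j ≠ k → θ * (q j * (1 - q j)) < p j * (1 - p j) := by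
    intro j hj
    by_contra hc
    have h1 : y j = (1 - θ) * (1 / (n : ℝ)) := if_pos ⟨hj, not_lt.1 hc⟩
    have h2 := flow_eq_zero hCrow (fun i => κ i * e i) y hy0 hflow j
    linarith
  -- by the choice of `w`, the entries of `p` and `w • q` off `k` have the same sum
  have hex : ∃ j ∈ Finset.univ.erase k, p j ≤ w * q j := by
    apply Finset.exists_le_of_sum_le
    · by_contra hc
      rw [Finset.not_nonempty_iff_eq_empty] at hc
      rw [hc, Finset.sum_empty] at hsq
      linarith
    · rw [← Finset.mul_sum]
      have : ∑ i ∈ Finset.univ.erase k, q i = 1 - q k := by linarith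
      rw [this, hwQ]
      linarith
  obtain ⟨j, hjk, hj⟩ := hex
  have hjk := Finset.ne_of_mem_erase hjk
  have hwq : w * q j ≤ q j := mul_le_of_le_one_left (hq0 j) hw1
  have h1 : p j * (1 - p j) ≤ w * q j * (1 - w * q j) := by
    nlinarith [mul_nonneg (sub_nonneg.2 hj)
      (by linarith [hsum j hjk] : 0 ≤ 1 - w * q j - p j)]
  have h2 : w * q j * (1 - w * q j) ≤ θ * (q j * (1 - q j)) := by
    have h3 : (1 - w * q j) * q k ≤ (1 - q j) * p k := by
      have h4 : (1 - q j) * p k - (1 - w * q j) * q k = (1 - w) * (1 - q k - q j) := by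
        linear_combination (1 - q j) * hwQ
      linarith [mul_nonneg (sub_nonneg.2 hw1) (sub_nonneg.2 (hqle j hjk))]
    have h4 := mul_le_mul_of_nonneg_left h3 (mul_nonneg hw0 (hq0 j))
    refine le_of_mul_le_mul_right ?_ hqk0
    calc w * q j * (1 - w * q j) * q k ≤ w * q j * ((1 - q j) * p k) := by linarith
      _ = θ * (q j * (1 - q j)) * q k := by linear_combination (-(q j * (1 - q j))) * hθq
  linarith [hstrict j hjk]

theorem IsBalanced.unique (hn : 0 < n) (hC0 : ∀ i j, 0 ≤ C i j)
    (hCrow : ∀ i, ∑ j, C i j = 1) (hκ : ∀ i, 0 ≤ κ i)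
    (hp : IsBalanced n C κ p) (hq : IsBalanced n C κ q)
    (hps : p ∈ simplex n) (hqs : q ∈ simplex n) : p = q := by
  have hgood : ∀ j, p j = q j ∨ p j + q j ≤ 1 := by
    intro j
    by_contra! hc
    rcases lt_or_gt_of_ne hc.1 with h | h
    · exact hq.not_lt_of_one_lt_add hn hC0 hCrow hκ hp hqs hps j (by linarith [hc.2]) h
    · exact hp.not_lt_of_one_lt_add hn hC0 hCrow hκ hq hps hqs j hc.2 h
  funext j
  refine sub_eq_zero.1 (abs_eq_zero.1 (flow_eq_zero hCrow
    (fun i => |κ i * (p i * (1 - p i)) - κ i * (q i * (1 - q i))|)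
    (fun i => |p i - q i|) (fun i => abs_nonneg _) (fun j => ?_) j))
  have hsign : |κ j * (p j * (1 - p j)) - κ j * (q j * (1 - q j))| + |p j - q j|
      = |(p j + κ j * (p j * (1 - p j))) - (q j + κ j * (q j * (1 - q j)))| := by
    rcases hgood j with h | h
    · simp [h]
    · have hc : 0 ≤ κ j * (1 - (p j + q j)) := mul_nonneg (hκ j) (by linarith)
      rw [show κ j * (p j * (1 - p j)) - κ j * (q j * (1 - q j))
          = κ j * (1 - (p j + q j)) * (p j - q j) by ring,
        show (p j + κ j * (p j * (1 - p j))) - (q j + κ j * (q j * (1 - q j)))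
          = (κ j * (1 - (p j + q j)) + 1) * (p j - q j) by ring,
        abs_mul _ (p j - q j), abs_mul _ (p j - q j), abs_of_nonneg hc,
        abs_of_nonneg (add_nonneg hc zero_le_one)]
      ring
  rw [hsign, hp j, hq j, add_sub_add_left_eq_sub, ← Finset.sum_sub_distrib]
  refine (Finset.abs_sum_le_sum_abs _ _).trans (Finset.sum_le_sum fun i _ => ?_)
  rw [← mul_sub, abs_mul, abs_of_nonneg (hC0 i j)]

end Uniqueness

/-! ### Existence -/

section Existence

/-- Knaster–Tarski on the box `[0, b]`, with `b` a super-solution. -/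
theorem exists_fixed_point {n : ℕ} (Φ : (Fin n → ℝ) → Fin n → ℝ)
    (hmono : ∀ x y, 0 ≤ x → x ≤ y → Φ x ≤ Φ y) (h0 : 0 ≤ Φ 0) (b : Fin n → ℝ) (hb : 0 ≤ b)
    (hΦb : Φ b ≤ b) : ∃ g, 0 ≤ g ∧ g ≤ b ∧ Φ g = g := by
  set S : Set (Fin n → ℝ) := {x | 0 ≤ x ∧ Φ x ≤ x} with hS
  have hbS : b ∈ S := ⟨hb, hΦb⟩
  let g : Fin n → ℝ := fun i => sInf ((fun x => x i) '' S)
  have hbdd : ∀ i, BddBelow ((fun x : Fin n → ℝ => x i) '' S) := fun i =>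
    ⟨0, by rintro _ ⟨x, hx, rfl⟩; exact hx.1 i⟩
  have hle : ∀ x ∈ S, g ≤ x := fun x hx i => csInf_le (hbdd i) ⟨x, hx, rfl⟩
  have hge : ∀ z, (∀ x ∈ S, z ≤ x) → z ≤ g := fun z hz i =>
    le_csInf ⟨_, b, hbS, rfl⟩ (by rintro _ ⟨x, hx, rfl⟩; exact hz x hx i)
  have hg0 : 0 ≤ g := hge 0 fun x hx => hx.1
  have h1 : Φ g ≤ g := hge _ fun x hx => (hmono g x hg0 (hle x hx)).trans hx.2
  have h2 : 0 ≤ Φ g := h0.trans (hmono 0 g le_rfl hg0)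
  exact ⟨g, hg0, hle b hbS, le_antisymm h1 (hle _ ⟨h2, hmono _ _ h2 h1⟩)⟩

/-- The monotone function agreeing with `x (1 - x)` up to `1/2` and constant `1/4` from there on. -/
noncomputable def φcap (x : ℝ) : ℝ := min x (1 / 2) * (1 - min x (1 / 2))

theorem φcap_of_le {x : ℝ} (h : x ≤ 1 / 2) : φcap x = x * (1 - x) := by
  rw [φcap, min_eq_left h]

theorem φcap_of_ge {x : ℝ} (h : 1 / 2 ≤ x) : φcap x = 1 / 4 := by
  rw [φcap, min_eq_right h]; norm_num

theorem φcap_mono : Monotone φcap := by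
  intro x y h
  have h1 : min x (1 / 2 : ℝ) ≤ min y (1 / 2) := min_le_min_right _ h
  have h2 : min x (1 / 2 : ℝ) ≤ 1 / 2 := min_le_right _ _
  have h3 : min y (1 / 2 : ℝ) ≤ 1 / 2 := min_le_right _ _
  unfold φcap
  nlinarith [mul_nonneg (sub_nonneg.2 h1)
    (by linarith : 0 ≤ 1 - min y (1 / 2 : ℝ) - min x (1 / 2 : ℝ))]

theorem φcap_le (x : ℝ) : φcap x ≤ 1 / 4 := by
  unfold φcap; nlinarith [sq_nonneg (min x (1 / 2 : ℝ) - 1 / 2)]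

theorem φcap_nonneg {x : ℝ} (h : 0 ≤ x) : 0 ≤ φcap x := by
  have := φcap_mono h
  rwa [φcap_of_le (by norm_num : (0 : ℝ) ≤ 1 / 2), zero_mul] at this

/-- The capped balance relation `x + c φcap(x) = u` can be solved for `x`. -/
theorem exists_response (c u : ℝ) (hc : 0 ≤ c) (hu : 0 ≤ u) :
    ∃ x, 0 ≤ x ∧ x + c * φcap x = u := by
  have hcont : ContinuousOn (fun x => x + c * φcap x) (Set.Icc 0 u) := by
    unfold φcap
    fun_prop
  obtain ⟨x, hx, hxu⟩ := intermediate_value_Icc hu hcont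
    (show u ∈ Set.Icc _ _ from ⟨by simpa [φcap] using hu, by
      have := mul_nonneg hc (φcap_nonneg hu); linarith⟩)
  exact ⟨x, hx.1, hxu⟩

/-- The solution `x` of `x + c φcap(x) = u` is monotone in `u`. -/
theorem response_le {c x y : ℝ} (hc : 0 ≤ c) (h : x + c * φcap x ≤ y + c * φcap y) : x ≤ y := by
  by_contra! hlt
  have := mul_le_mul_of_nonneg_left (φcap_mono hlt.le) hc
  linarith

theorem exists_isBalanced {n : ℕ} (hn : 0 < n) {C : Matrix (Fin n) (Fin n) ℝ}
    (hC0 : ∀ i j, 0 ≤ C i j) (hCrow : ∀ i, ∑ j, C i j = 1) {κ : Fin n → ℝ}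
    (hκ : ∀ i, 0 ≤ κ i) : ∃ p ∈ simplex n, IsBalanced n C κ p := by
  classical
  have hn' : (0 : ℝ) < n := by exact_mod_cast hn
  -- `R j u` is the perception of node `j` under inflow `u` in the capped system
  choose! R hR0 hR using fun (j : Fin n) (u : ℝ) (hu : 0 ≤ u) => exists_response (κ j) u (hκ j) hu
  have hRmono : ∀ j u v, 0 ≤ u → u ≤ v → R j u ≤ R j v := fun j u v hu huv =>
    response_le (hκ j) (by rw [hR j u hu, hR j v (hu.trans huv)]; exact huv)
  let U : (Fin n → ℝ) → Fin n → ℝ := fun g j => 1 / (n : ℝ) + ∑ i, C i j * g i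
  have hU0 : ∀ g, 0 ≤ g → ∀ j, 0 ≤ U g j := fun g hg j =>
    add_nonneg (one_div_pos.2 hn').le
      (Finset.sum_nonneg fun i _ => mul_nonneg (hC0 i j) (hg i))
  have hUmono : ∀ g h, g ≤ h → ∀ j, U g j ≤ U h j := fun g h hgh j =>
    add_le_add_right (Finset.sum_le_sum fun i _ =>
      mul_le_mul_of_nonneg_left (hgh i) (hC0 i j)) _
  have hUsum : ∀ g, ∑ j, U g j = 1 + ∑ i, g i := fun g => by
    simp only [U]
    rw [Finset.sum_add_distrib, sum_flow hCrow]
    simp [hn'.ne']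
  obtain ⟨g', hg'0, -, hg'⟩ := exists_fixed_point
    (fun g j => κ j * φcap (R j (U g j)))
    (fun x y hx hxy j => mul_le_mul_of_nonneg_left
      (φcap_mono (hRmono j _ _ (hU0 x hx j) (hUmono x y hxy j))) (hκ j))
    (fun j => mul_nonneg (hκ j) (φcap_nonneg (hR0 j _ (hU0 0 le_rfl j))))
    (fun j => κ j * (1 / 4)) (fun j => mul_nonneg (hκ j) (by norm_num))
    (fun j => mul_le_mul_of_nonneg_left (φcap_le _) (hκ j))
  have hg'j : ∀ j, κ j * φcap (R j (U g' j)) = g' j := fun j => congrFun hg' j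
  set p' : Fin n → ℝ := fun j => R j (U g' j) with hp'
  have hp'0 : ∀ j, 0 ≤ p' j := fun j => hR0 j _ (hU0 g' hg'0 j)
  have hp'g : ∀ j, p' j + g' j = U g' j := fun j => by
    rw [← hg'j j]; exact hR j _ (hU0 g' hg'0 j)
  have hp'1 : ∑ j, p' j = 1 := by
    have := hUsum g'
    rw [← Finset.sum_congr rfl fun j _ => hp'g j, Finset.sum_add_distrib] at this
    linarith
  by_cases hall : ∀ j, p' j ≤ 1 / 2
  · have hφ : ∀ j, κ j * (p' j * (1 - p' j)) = g' j := fun j => by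
      rw [← φcap_of_le (hall j)]; exact hg'j j
    refine ⟨p', ⟨hp'0, hp'1⟩, fun j => ?_⟩
    simp only [hφ]
    exact hp'g j
  push Not at hall
  obtain ⟨k, hk⟩ := hall
  -- the outflow of `k` is now driven by the mass `P g` of the other nodes
  let P : (Fin n → ℝ) → ℝ := fun g => ∑ j ∈ Finset.univ.erase k, R j (U g j)
  have hPmono : ∀ x y, 0 ≤ x → x ≤ y → P x ≤ P y := fun x y hx hxy =>
    Finset.sum_le_sum fun j _ => hRmono j _ _ (hU0 x hx j) (hUmono x y hxy j)
  have hP0 : ∀ x, 0 ≤ x → 0 ≤ P x := fun x hx =>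
    Finset.sum_nonneg fun j _ => hR0 j _ (hU0 x hx j)
  have hPg' : P g' < 1 / 2 := by
    have := Finset.add_sum_erase Finset.univ p' (Finset.mem_univ k)
    rw [hp'1] at this
    change ∑ j ∈ Finset.univ.erase k, p' j < 1 / 2
    linarith
  obtain ⟨g, hg0, hgg', hg⟩ := exists_fixed_point
    (fun g j => κ j * φcap (if j = k then P g else R j (U g j)))
    (fun x y hx hxy j => mul_le_mul_of_nonneg_left (φcap_mono (by
      split_ifs
      · exact hPmono x y hx hxy
      · exact hRmono j _ _ (hU0 x hx j) (hUmono x y hxy j))) (hκ j))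
    (fun j => mul_nonneg (hκ j) (φcap_nonneg (by
      split_ifs
      · exact hP0 0 le_rfl
      · exact hR0 j _ (hU0 0 le_rfl j))))
    g' hg'0 (fun j => by
      by_cases hj : j = k
      · subst hj
        rw [← hg'j j, φcap_of_ge hk.le]
        exact mul_le_mul_of_nonneg_left (φcap_le _) (hκ j)
      · simp only [hj, if_false]
        exact (hg'j j).le)
  have hPlt : P g < 1 / 2 := (hPmono g g' hg0 hgg').trans_lt hPg'
  have hgk : κ k * φcap (P g) = g k := by simpa using congrFun hg k
  have hgj : ∀ j, j ≠ k → κ j * φcap (R j (U g j)) = g j := fun j hj => by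
    simpa [hj] using congrFun hg j
  set p : Fin n → ℝ := fun j => if j = k then 1 - P g else R j (U g j) with hp
  have hpk : p k = 1 - P g := if_pos rfl
  have hpj : ∀ j, j ≠ k → p j = R j (U g j) := fun j hj => if_neg hj
  have hpsum : ∑ j ∈ Finset.univ.erase k, p j = P g :=
    Finset.sum_congr rfl fun j hj => hpj j (Finset.ne_of_mem_erase hj)
  have hp0 : ∀ j, 0 ≤ p j := fun j => by
    by_cases hj : j = k
    · rw [hj, hpk]; linarith
    · rw [hpj j hj]; exact hR0 j _ (hU0 g hg0 j)
  have hp1 : ∑ j, p j = 1 := by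
    rw [← Finset.add_sum_erase Finset.univ p (Finset.mem_univ k), hpsum, hpk]; ring
  have hφ : ∀ j, κ j * (p j * (1 - p j)) = g j := fun j => by
    by_cases hj : j = k
    · rw [hj, ← hgk, hpk, φcap_of_le hPlt.le]; ring
    · have hle : p j ≤ P g := by
        rw [← hpsum]
        exact Finset.single_le_sum (f := p) (fun i _ => hp0 i)
          (Finset.mem_erase.2 ⟨hj, Finset.mem_univ j⟩)
      rw [← hgj j hj, ← hpj j hj, φcap_of_le (by linarith)]
  have hbal : ∀ j, j ≠ k → p j + g j = U g j := fun j hj => by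
    rw [← hgj j hj, hpj j hj]; exact hR j _ (hU0 g hg0 j)
  refine ⟨p, ⟨hp0, hp1⟩, fun j => ?_⟩
  simp only [hφ]
  change p j + g j = U g j
  by_cases hj : j = k
  · -- the equation at `k` follows from the others, since both sides have equal sums
    have h1 := hUsum g
    rw [← hp1, ← Finset.sum_add_distrib, ← Finset.add_sum_erase _ (U g) (Finset.mem_univ k),
      ← Finset.add_sum_erase _ (fun j => p j + g j) (Finset.mem_univ k),
      Finset.sum_congr rfl fun i hi => hbal i (Finset.ne_of_mem_erase hi)] at h1
    rw [hj]
    linarith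
  · exact hbal j hj

end Existence

/-- under Assumption A1, system (11) has a unique equilibrium in the
simplex `Δ_n`, and this equilibrium has all entries strictly positive. -/
theorem unique_equilibrium_in_simplex
    (n : ℕ) (hn : 2 ≤ n)
    (C : Matrix (Fin n) (Fin n) ℝ)
    (hC0 : ∀ i j, 0 ≤ C i j) (hCrow : ∀ i, ∑ j, C i j = 1) (hCdiag : ∀ i, C i i = 0)
    (a : Fin n → ℝ) (ha0 : ∀ i, 0 ≤ a i) (ha1 : ∀ i, a i < 1) (hane : a ≠ 0) :
    ∃ pstar : Fin n → ℝ,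
      (pstar ∈ simplex n ∧ percMap n C a pstar = pstar) ∧
      (∀ i, 0 < pstar i) ∧
      (∀ q ∈ simplex n, percMap n C a q = q → q = pstar) := by
  have hn0 : 0 < n := by omega
  have hκ : ∀ i, 0 ≤ a i / (1 - a i) := fun i => div_nonneg (ha0 i) (by linarith [ha1 i])
  obtain ⟨p, hps, hp⟩ := exists_isBalanced hn0 hC0 hCrow hκ
  refine ⟨p, ⟨hps, (percMap_eq_iff n C a ha1 p).2 hp⟩, fun j => ?_, fun q hqs hq =>
    ((percMap_eq_iff n C a ha1 q).1 hq).unique hn0 hC0 hCrow hκ hp hqs hps⟩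
  have hp1 : ∀ i, p i ≤ 1 := fun i => by
    rw [← hps.2]
    exact Finset.single_le_sum (fun i _ => hps.1 i) (Finset.mem_univ i)
  refine lt_of_le_of_ne (hps.1 j) fun h0 => ?_
  have hj := hp j
  rw [← h0] at hj
  have h1 : 0 ≤ ∑ i, C i j * (a i / (1 - a i) * (p i * (1 - p i))) :=
    Finset.sum_nonneg fun i _ => mul_nonneg (hC0 i j)
      (mul_nonneg (hκ i) (mul_nonneg (hps.1 i) (by linarith [hp1 i])))
  have h2 : 0 < 1 / (n : ℝ) := one_div_pos.2 (by exact_mod_cast hn0)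
  simp only [zero_mul, mul_zero, add_zero] at hj
  linarith
end

section
/- Suppose Assumption A1 holds, the influence network is a star topology with center node 1 (C_{j1} = 1 and C_{ji} = 0 for all j ≠ 1 and all i ≠ 1), and the center node is fully stubborn (a_1 = 0). Let p*_j = (1 − √(1 − 4a_j(1 − a_j)/n))/(2a_j) for j ∈ V_p. Then for any initial perception p(0) ∈ [0,1]^n and any j ∈ V_p, the trajectory of the perception dynamics with reflected appraisals (system (11)) satisfies: p_j(s) is strictly increasing in s if p_j(0) < p*_j, and strictly decreasing in s if p_j(0) > p*_j. -/
/-!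
Because the centre is fully stubborn (`a 0 = 0`) and every other row of `C` is concentrated on the
centre, the system decouples at each partially stubborn `j` into the scalar quadratic recursion
`x ↦ a x² + (1 - a) / n` (`percMap_star_apply`). This quadratic map minus the identity is
`a (x - r) (x - R)` with `0 ≤ r` and `1 < R`, where `r = p*_j`. On `[0, r)` it is therefore above
the identity and on `(r, 1]` below it; being increasing on `[0, ∞)`, the map preserves both
intervals, so orbits are strictly monotone (`quadratic_orbit_strictMono`,
`quadratic_orbit_strictAnti`).
-/

open Matrix Finset

/-- The decoupled scalar recursion: the term `k = 0` of the sum vanishes because `a 0 = 0`, and the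
terms `k ≠ 0, j` vanish because `C k j = 0`. -/
lemma percMap_star_apply (n : ℕ) [NeZero n] (C : Matrix (Fin n) (Fin n) ℝ)
    (a : Fin n → ℝ) (ha1 : ∀ i, a i < 1)
    (hstar2 : ∀ j : Fin n, j ≠ 0 → ∀ i : Fin n, i ≠ 0 → C j i = 0)
    (hcenter : a 0 = 0) (x : Fin n → ℝ) (j : Fin n) (hj : j ≠ 0) :
    percMap n C a x j = a j * x j ^ 2 + (1 - a j) / n := by
  have hne : ∀ i, 1 - a i ≠ 0 := fun i => by linarith [ha1 i]
  have hinv : (1 - Matrix.diagonal a)⁻¹ = Matrix.diagonal (fun i => (1 - a i)⁻¹) := by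
    apply Matrix.inv_eq_right_inv
    rw [← Matrix.diagonal_one, Matrix.diagonal_sub, Matrix.diagonal_mul_diagonal]
    congr 1
    funext i
    exact mul_inv_cancel₀ (hne i)
  have hone : (1 - Matrix.diagonal a) = Matrix.diagonal (fun i => 1 - a i) := by
    rw [← Matrix.diagonal_one, Matrix.diagonal_sub]
  have honex : (1 - Matrix.diagonal x) = Matrix.diagonal (fun i => 1 - x i) := by
    rw [← Matrix.diagonal_one, Matrix.diagonal_sub]
  unfold percMap Wmat
  rw [hinv, hone, honex]
  simp only [Pi.add_apply, Pi.smul_apply, Matrix.mulVec_diagonal, smul_eq_mul, Matrix.mulVec,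
    dotProduct, Matrix.mul_diagonal, Matrix.diagonal_mul, Matrix.transpose_apply,
    Matrix.add_apply]
  rw [Finset.sum_eq_single j]
  · have := hne j
    simp [Matrix.diagonal_apply, hstar2 j hj j hj]
    field_simp
  · intro k _ hkj
    by_cases hk : k = 0
    · subst hk; simp [hcenter]
    · simp [Matrix.diagonal_apply, hkj, hstar2 k hk j hj]
  · simp

/-- Here `r` and `R` are the fixed points of the quadratic map, given through Vieta's relations. -/
lemma quadratic_orbit_strictMono {a b r R : ℝ} (ha : 0 < a) (hb : 0 ≤ b) (hrR : r < R)
    (hsum : a * (r + R) = 1) (hprod : a * r * R = b) (x : ℕ → ℝ)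
    (hx : ∀ s, x (s + 1) = a * x s ^ 2 + b) (h0 : 0 ≤ x 0) (h : x 0 < r) : StrictMono x := by
  have key : ∀ s, 0 ≤ x s ∧ x s < r := by
    intro s
    induction s with
    | zero => exact ⟨h0, h⟩
    | succ s ih =>
      refine ⟨by rw [hx]; positivity, ?_⟩
      have hid : r - x (s + 1) = a * ((r - x s) * (r + x s)) := by
        rw [hx]; linear_combination (-r) * hsum + hprod
      have : 0 < a * ((r - x s) * (r + x s)) :=
        mul_pos ha (mul_pos (by linarith) (by linarith))
      linarith
  refine strictMono_nat_of_lt_succ fun s => ?_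
  have hid : x (s + 1) - x s = a * ((r - x s) * (R - x s)) := by
    rw [hx]; linear_combination x s * hsum - hprod
  have : 0 < a * ((r - x s) * (R - x s)) :=
    mul_pos ha (mul_pos (by linarith [key s]) (by linarith [key s]))
  linarith

/-- The condition `1 < R` makes the starting interval `(r, 1]` lie strictly between the two fixed
points `r` and `R`, which are given through Vieta's relations. -/
lemma quadratic_orbit_strictAnti {a b r R : ℝ} (ha : 0 < a) (hr : 0 ≤ r) (hR : 1 < R)
    (hsum : a * (r + R) = 1) (hprod : a * r * R = b) (x : ℕ → ℝ)
    (hx : ∀ s, x (s + 1) = a * x s ^ 2 + b) (h1 : x 0 ≤ 1) (h : r < x 0) : StrictAnti x := by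
  have step : ∀ s, r < x s → x s ≤ 1 → x (s + 1) < x s := by
    intro s hs hs1
    have hid : x s - x (s + 1) = a * ((x s - r) * (R - x s)) := by
      rw [hx]; linear_combination (-x s) * hsum + hprod
    have : 0 < a * ((x s - r) * (R - x s)) :=
      mul_pos ha (mul_pos (by linarith) (by linarith))
    linarith
  have key : ∀ s, r < x s ∧ x s ≤ 1 := by
    intro s
    induction s with
    | zero => exact ⟨h, h1⟩
    | succ s ih =>
      refine ⟨?_, (step s ih.1 ih.2).le.trans ih.2⟩
      have hid : x (s + 1) - r = a * ((x s - r) * (x s + r)) := by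
        rw [hx]; linear_combination r * hsum - hprod
      have : 0 < a * ((x s - r) * (x s + r)) :=
        mul_pos ha (mul_pos (by linarith) (by linarith))
      linarith
  exact strictAnti_nat_of_succ_lt fun s => step s (key s).1 (key s).2

/-- Corollary 1(i): star topology with fully stubborn center node `0`;
for partially stubborn `j`, the coordinate `p_j(s)` of the trajectory of system (11)
is strictly increasing if `p_j(0) < p*_j` and strictly decreasing if `p_j(0) > p*_j`. -/
theorem star_fully_stubborn_center_monotonicity
    (n : ℕ) [NeZero n] (hn : 2 ≤ n)
    (C : Matrix (Fin n) (Fin n) ℝ)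
    (hC0 : ∀ i j, 0 ≤ C i j) (hCrow : ∀ i, ∑ j, C i j = 1) (hCdiag : ∀ i, C i i = 0)
    (a : Fin n → ℝ) (ha0 : ∀ i, 0 ≤ a i) (ha1 : ∀ i, a i < 1) (hane : a ≠ 0)
    (hstar1 : ∀ j : Fin n, j ≠ 0 → C j 0 = 1)
    (hstar2 : ∀ j : Fin n, j ≠ 0 → ∀ i : Fin n, i ≠ 0 → C j i = 0)
    (hcenter : a 0 = 0)
    (p : ℕ → Fin n → ℝ) (hp : ∀ s, p (s + 1) = percMap n C a (p s))
    (hp0 : ∀ i, 0 ≤ p 0 i ∧ p 0 i ≤ 1)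
    (j : Fin n) (hj : 0 < a j) :
    (p 0 j < (1 - Real.sqrt (1 - 4 * a j * (1 - a j) / n)) / (2 * a j) →
      StrictMono (fun s => p s j)) ∧
    (p 0 j > (1 - Real.sqrt (1 - 4 * a j * (1 - a j) / n)) / (2 * a j) →
      StrictAnti (fun s => p s j)) := by
  have hj0 : j ≠ 0 := by rintro rfl; linarith
  have hrec : ∀ s, p (s + 1) j = a j * p s j ^ 2 + (1 - a j) / n := fun s => by
    rw [hp s, percMap_star_apply n C a ha1 hstar2 hcenter _ j hj0]
  have hn' : (2 : ℝ) ≤ n := by exact_mod_cast hn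
  have hlt := ha1 j
  have hb : 0 ≤ (1 - a j) / n := div_nonneg (by linarith) (by linarith)
  -- `n ≥ 2` gives `b < 1 - a`: the quadratic map sends `1` below `1`, so `1` lies below `R`.
  have hb1 : (1 - a j) / n < 1 - a j := div_lt_self (by linarith) (by linarith)
  have hD : 1 - 4 * a j * (1 - a j) / n = 1 - 4 * a j * ((1 - a j) / n) := by ring
  rw [hD]
  generalize a j = α at *
  generalize (1 - α) / (n : ℝ) = b at *
  have hDpos : 0 < 1 - 4 * α * b := by nlinarith [sq_nonneg (2 * α - 1)]
  have htsq := Real.sq_sqrt hDpos.le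
  have htpos := Real.sqrt_pos.mpr hDpos
  have ht1 : √(1 - 4 * α * b) ≤ 1 :=
    Real.sqrt_le_one.mpr (by linarith [mul_nonneg hj.le hb])
  have ht2 : 2 * α - 1 < √(1 - 4 * α * b) := Real.lt_sqrt_of_sq_lt (by nlinarith)
  generalize √(1 - 4 * α * b) = t at *
  have hsum : α * ((1 - t) / (2 * α) + (1 + t) / (2 * α)) = 1 := by field_simp; ring
  have hprod : α * ((1 - t) / (2 * α)) * ((1 + t) / (2 * α)) = b := by
    field_simp
    linear_combination -htsq
  refine ⟨fun h => ?_, fun h => ?_⟩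
  · refine quadratic_orbit_strictMono hj hb ?_ hsum hprod (fun s => p s j) hrec (hp0 j).1 h
    gcongr; linarith
  · refine quadratic_orbit_strictAnti hj ?_ ?_ hsum hprod (fun s => p s j) hrec (hp0 j).2 h
    · exact div_nonneg (by linarith) (by linarith)
    · rw [lt_div_iff₀ (by linarith)]; linarith
end
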